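/- For any N pairwise distinct points x_1, …, x_N in ℝ^d and any constant c > 0, the N × N interpolation matrix A with entries A_{ij} = √((‖x_i − x_j‖/c)² + 1) arising from the multiquadric radial basis function is invertible (its determinant is nonzero). Consequently, the multiquadric RBF interpolation problem of Equation (4) has a unique solution for every data vector. -/

import Mathlib

open MeasureTheory Set Filter Topology

lemma mq_gauss_prod {V : Type*} [NormedAddCommGroup V] [InnerProductSpace ℝ V] (b : ℝ) (x y v : V) :
    Real.exp (-b * ‖v - x‖ ^ 2) * Real.exp (-b * ‖v - y‖ ^ 2)
      = Real.exp (-(b / 2) * ‖x - y‖ ^ 2) *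
        Real.exp (-(2 * b) * ‖v - (1 / 2 : ℝ) • (x + y)‖ ^ 2) := by
  rw [← Real.exp_add, ← Real.exp_add]
  congr 1
  have h1 : v - x = (v - (1 / 2 : ℝ) • (x + y)) - (1 / 2 : ℝ) • (x - y) := by module
  have h2 : v - y = (v - (1 / 2 : ℝ) • (x + y)) + (1 / 2 : ℝ) • (x - y) := by module
  rw [h1, h2]
  generalize v - (1 / 2 : ℝ) • (x + y) = w
  have := norm_add_sq_real w ((1 / 2 : ℝ) • (x - y))
  have h4 := norm_sub_sq_real w ((1 / 2 : ℝ) • (x - y))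
  have h3 : ‖(1 / 2 : ℝ) • (x - y)‖ ^ 2 = 1 / 4 * ‖x - y‖ ^ 2 := by
    rw [norm_smul, mul_pow]; norm_num
  rw [this, h4, h3]; ring

lemma mq_integrable {V : Type*} [NormedAddCommGroup V] [InnerProductSpace ℝ V]
    [FiniteDimensional ℝ V] [MeasurableSpace V] [BorelSpace V] {b : ℝ} (hb : 0 < b) :
    Integrable (fun v : V => Real.exp (-b * ‖v‖ ^ 2)) := by
  have h := (GaussianFourier.integrable_cexp_neg_mul_sq_norm_add (V := V) (b := (b : ℂ))
    (by simpa using hb) 0 0).norm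
  refine h.congr (ae_of_all _ fun v => ?_)
  simp [Complex.norm_exp, ← Complex.ofReal_pow]

lemma mq_gauss_psd {d N : ℕ} (x : Fin N → EuclideanSpace ℝ (Fin d)) (l : Fin N → ℝ) {t : ℝ}
    (ht : 0 < t) : 0 ≤ ∑ i, ∑ j, l i * l j * Real.exp (-t * ‖x i - x j‖ ^ 2) := by
  set C := ∫ v : EuclideanSpace ℝ (Fin d), Real.exp (-(2 * (2 * t)) * ‖v‖ ^ 2) with hC
  have hint := mq_integrable (V := EuclideanSpace ℝ (Fin d)) (b := 2 * (2 * t)) (by positivity)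
  have hCpos : 0 < C := by
    rw [hC, GaussianFourier.integral_rexp_neg_mul_sq_norm (by positivity)]
    positivity
  have key : ∫ v, (∑ i, l i * Real.exp (-(2 * t) * ‖v - x i‖ ^ 2)) ^ 2
      = (∑ i, ∑ j, l i * l j * Real.exp (-t * ‖x i - x j‖ ^ 2)) * C := by
    have e : ∀ v, (∑ i, l i * Real.exp (-(2 * t) * ‖v - x i‖ ^ 2)) ^ 2
        = ∑ i, ∑ j, l i * l j * Real.exp (-t * ‖x i - x j‖ ^ 2) *
          Real.exp (-(2 * (2 * t)) * ‖v - (1 / 2 : ℝ) • (x i + x j)‖ ^ 2) := by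
      intro v
      rw [sq, Finset.sum_mul_sum]
      refine Finset.sum_congr rfl fun i _ => Finset.sum_congr rfl fun j _ => ?_
      have := mq_gauss_prod (2 * t) (x i) (x j) v
      rw [show 2 * t / 2 = t by ring] at this
      linear_combination l i * l j * this
    simp_rw [e]
    have hi : ∀ i j, Integrable (fun v => l i * l j * Real.exp (-t * ‖x i - x j‖ ^ 2) *
          Real.exp (-(2 * (2 * t)) * ‖v - (1 / 2 : ℝ) • (x i + x j)‖ ^ 2)) := fun i j =>
      (hint.comp_sub_right _).const_mul _
    rw [integral_finsetSum _ fun i _ => integrable_finsetSum _ fun j _ => hi i j, Finset.sum_mul]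
    refine Finset.sum_congr rfl fun i _ => ?_
    rw [integral_finsetSum _ fun j _ => hi i j, Finset.sum_mul]
    refine Finset.sum_congr rfl fun j _ => ?_
    rw [integral_const_mul, hC]
    congr 1
    exact integral_sub_right_eq_self
      (fun v : EuclideanSpace ℝ (Fin d) => Real.exp (-(2 * (2 * t)) * ‖v‖ ^ 2)) _
  have h0 : 0 ≤ ∫ v, (∑ i, l i * Real.exp (-(2 * t) * ‖v - x i‖ ^ 2)) ^ 2 :=
    integral_nonneg fun v => sq_nonneg _
  rw [key] at h0
  exact nonneg_of_mul_nonneg_left h0 hCpos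

noncomputable def mqF (s t : ℝ) : ℝ := (1 - Real.exp (-t * s)) * t ^ (-(3 / 2) : ℝ)

lemma mqF_one : IntegrableOn (mqF 1) (Ioi 0) := by
  have hm : Measurable (mqF 1) := by unfold mqF; fun_prop
  rw [← Ioc_union_Ioi_eq_Ioi (zero_le_one' ℝ)]
  refine IntegrableOn.union ?_ ?_
  · have h : IntegrableOn (fun t : ℝ => t ^ (-(1 / 2) : ℝ)) (Ioc 0 1) :=
      (intervalIntegrable_iff_integrableOn_Ioc_of_le zero_le_one).1
        (intervalIntegral.intervalIntegrable_rpow' (by norm_num))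
    refine Integrable.mono' h hm.aestronglyMeasurable ?_
    refine (ae_restrict_iff' measurableSet_Ioc).2 (ae_of_all _ fun t ht => ?_)
    have h1 : 0 ≤ 1 - Real.exp (-t * 1) := by
      have := Real.exp_le_one_iff.2 (show -t * 1 ≤ 0 by linarith [ht.1]); linarith
    have h2 : 1 - Real.exp (-t * 1) ≤ t := by
      have := Real.add_one_le_exp (-t * 1); linarith
    have hp : 0 ≤ t ^ (-(3 / 2) : ℝ) := Real.rpow_nonneg ht.1.le _
    rw [mqF, Real.norm_of_nonneg (mul_nonneg h1 hp)]
    calc _ ≤ t * t ^ (-(3 / 2) : ℝ) := by gcongr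
      _ = t ^ (-(1 / 2) : ℝ) := by
        rw [← Real.rpow_one_add' ht.1.le (by norm_num)]; norm_num
  · have h := integrableOn_Ioi_rpow_of_lt (show (-(3 / 2) : ℝ) < -1 by norm_num) zero_lt_one
    refine Integrable.mono' h hm.aestronglyMeasurable ?_
    refine (ae_restrict_iff' measurableSet_Ioi).2 (ae_of_all _ fun t ht => ?_)
    have ht0 : (0 : ℝ) < t := zero_lt_one.trans ht
    have h1 : 0 ≤ 1 - Real.exp (-t * 1) := by
      have := Real.exp_le_one_iff.2 (show -t * 1 ≤ 0 by linarith); linarith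
    have h2 : 1 - Real.exp (-t * 1) ≤ 1 := by
      have := Real.exp_pos (-t * 1); linarith
    have hp : 0 ≤ t ^ (-(3 / 2) : ℝ) := Real.rpow_nonneg ht0.le _
    rw [mqF, Real.norm_of_nonneg (mul_nonneg h1 hp)]
    exact mul_le_of_le_one_left hp h2

lemma mqF_scale {s t : ℝ} (hs : 0 < s) (ht : 0 < t) :
    mqF s t = s ^ (3 / 2 : ℝ) * mqF 1 (s * t) := by
  unfold mqF
  rw [Real.mul_rpow hs.le ht.le, Real.rpow_neg hs.le]
  have : s ^ (3 / 2 : ℝ) ≠ 0 := (Real.rpow_pos_of_pos hs _).ne'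
  rw [show -(s * t) * 1 = -t * s by ring]
  field_simp

lemma mqF_int {s : ℝ} (hs : 0 < s) : IntegrableOn (mqF s) (Ioi 0) := by
  have h : IntegrableOn (fun t => mqF 1 (s * t)) (Ioi 0) := by
    rw [integrableOn_Ioi_comp_mul_left_iff _ _ hs, mul_zero]; exact mqF_one
  exact IntegrableOn.congr_fun (h.const_mul (s ^ (3 / 2 : ℝ))) (fun t ht => (mqF_scale hs ht).symm)
    measurableSet_Ioi

lemma mqF_integral {s : ℝ} (hs : 0 < s) :
    ∫ t in Ioi 0, mqF s t = √s * ∫ t in Ioi 0, mqF 1 t := by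
  rw [setIntegral_congr_fun measurableSet_Ioi (fun t ht => mqF_scale hs ht), integral_const_mul,
    integral_comp_mul_left_Ioi _ _ hs, mul_zero, smul_eq_mul, ← mul_assoc]
  congr 1
  rw [Real.sqrt_eq_rpow, ← Real.rpow_neg_one, ← Real.rpow_add hs]; norm_num

lemma mqF_C_nonneg : 0 ≤ ∫ t in Ioi 0, mqF 1 t := by
  refine setIntegral_nonneg measurableSet_Ioi fun t ht => ?_
  have ht0 : (0 : ℝ) < t := ht
  have h1 : 0 ≤ 1 - Real.exp (-t * 1) := by
    have := Real.exp_le_one_iff.2 (show -t * 1 ≤ 0 by linarith); linarith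
  exact mul_nonneg h1 (Real.rpow_nonneg ht0.le _)

lemma mq_neg {d N : ℕ} (x : Fin N → EuclideanSpace ℝ (Fin d))
    (hx : Function.Injective x) (c : ℝ) (hc : 0 < c) (l : Fin N → ℝ) (hl : l ≠ 0)
    (hsum : ∑ i, l i = 0) :
    ∑ i, ∑ j, l i * l j * √((‖x i - x j‖ / c) ^ 2 + 1) < 0 := by
  set s : Fin N → Fin N → ℝ := fun i j => (‖x i - x j‖ / c) ^ 2 + 1 with hs
  have hspos : ∀ i j, 0 < s i j := fun i j => by simp only [hs]; positivity
  set g : ℝ → ℝ := fun t =>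
    (∑ i, ∑ j, l i * l j * Real.exp (-t * s i j)) * t ^ (-(3 / 2) : ℝ) with hg
  have hss : ∑ i, ∑ j, l i * l j = 0 := by rw [← Finset.sum_mul_sum, hsum, zero_mul]
  have hgF : ∀ t, ∑ i, ∑ j, l i * l j * mqF (s i j) t = - g t := by
    intro t
    have : ∀ i j, l i * l j * mqF (s i j) t = l i * l j * t ^ (-(3 / 2) : ℝ)
      - l i * l j * Real.exp (-t * s i j) * t ^ (-(3 / 2) : ℝ) := by
        intro i j; unfold mqF; ring
    simp_rw [this, Finset.sum_sub_distrib, ← Finset.sum_mul, hss, hg]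
    ring
  have hi : ∀ i j, Integrable (fun t => l i * l j * mqF (s i j) t) (volume.restrict (Ioi 0)) :=
    fun i j => Integrable.const_mul (mqF_int (hspos i j)) _
  have hgint : IntegrableOn g (Ioi 0) := by
    have : Integrable (fun t => ∑ i, ∑ j, l i * l j * mqF (s i j) t)
      (volume.restrict (Ioi 0)) :=
      integrable_finsetSum _ fun i _ => integrable_finsetSum _ fun j _ => hi i j
    simp_rw [hgF] at this
    have h2 : Integrable g (volume.restrict (Ioi 0)) := by simpa using this.neg
    exact h2
  have key : (∑ i, ∑ j, l i * l j * √(s i j)) * (∫ t in Ioi 0, mqF 1 t)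
      = - ∫ t in Ioi 0, g t := by
    rw [← integral_neg]
    simp_rw [← hgF]
    rw [integral_finsetSum _ fun i _ => integrable_finsetSum _ fun j _ => hi i j, Finset.sum_mul]
    refine Finset.sum_congr rfl fun i _ => ?_
    rw [integral_finsetSum _ fun j _ => hi i j, Finset.sum_mul]
    refine Finset.sum_congr rfl fun j _ => ?_
    rw [integral_const_mul, mqF_integral (hspos i j)]; ring
  have hfac : ∀ t, ∑ i, ∑ j, l i * l j * Real.exp (-t * s i j) = Real.exp (-t) *
      ∑ i, ∑ j, l i * l j * Real.exp (-(t / c ^ 2) * ‖x i - x j‖ ^ 2) := by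
    intro t
    simp_rw [Finset.mul_sum]
    refine Finset.sum_congr rfl fun i _ => Finset.sum_congr rfl fun j _ => ?_
    rw [mul_left_comm, ← Real.exp_add]
    congr 2
    simp only [hs]; field_simp; ring
  have hg0 : ∀ t ∈ Ioi (0 : ℝ), 0 ≤ g t := by
    intro t ht
    have ht0 : (0 : ℝ) < t := ht
    simp only [hg]
    rw [hfac]
    have := mq_gauss_psd x l (t := t / c ^ 2) (by positivity)
    exact mul_nonneg (mul_nonneg (Real.exp_pos _).le this) (Real.rpow_nonneg ht0.le _)
  have hlim : Tendsto (fun t : ℝ => ∑ i, ∑ j, l i * l j *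
      Real.exp (-(t / c ^ 2) * ‖x i - x j‖ ^ 2)) atTop
      (𝓝 (∑ i, ∑ j, l i * l j * if i = j then 1 else 0)) := by
    refine tendsto_finsetSum _ fun i _ => tendsto_finsetSum _ fun j _ => Tendsto.const_mul _ ?_
    split_ifs with h
    · subst h; simp
    · have hp : 0 < ‖x i - x j‖ := norm_pos_iff.2 (sub_ne_zero.2 (hx.ne h))
      refine Real.tendsto_exp_atBot.comp ?_
      have : Tendsto (fun t : ℝ => t * (-(‖x i - x j‖ ^ 2 / c ^ 2))) atTop atBot :=
        tendsto_id.atTop_mul_const_of_neg (by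
          have : 0 < ‖x i - x j‖ ^ 2 / c ^ 2 := by positivity
          linarith)
      refine this.congr fun t => by ring
  have hlpos : 0 < ∑ i, ∑ j, l i * l j * if i = j then (1 : ℝ) else 0 := by
    obtain ⟨k, hk⟩ := Function.ne_iff.1 hl
    simp only [mul_ite, mul_one, mul_zero, Finset.sum_ite_eq, Finset.mem_univ, if_true]
    exact Finset.sum_pos' (fun i _ => mul_self_nonneg _)
      ⟨k, Finset.mem_univ _, mul_self_pos.2 hk⟩
  obtain ⟨T, hT⟩ := eventually_atTop.1 (hlim.eventually (lt_mem_nhds hlpos))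
  have hgpos : 0 < ∫ t in Ioi 0, g t := by
    rw [setIntegral_pos_iff_support_of_nonneg_ae
      ((ae_restrict_iff' measurableSet_Ioi).2 (ae_of_all _ hg0)) hgint]
    have hsub : Ioi (max T 0) ⊆ Function.support g ∩ Ioi 0 := by
      intro t ht
      have h1 : T < t := (le_max_left _ _).trans_lt ht
      have h2 : 0 < t := (le_max_right _ _).trans_lt ht
      refine ⟨?_, h2⟩
      simp only [hg, Function.mem_support]
      rw [hfac]
      exact (mul_pos (mul_pos (Real.exp_pos _) (hT t h1.le)) (Real.rpow_pos_of_pos h2 _)).ne'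
    refine lt_of_lt_of_le ?_ (measure_mono hsub)
    simp
  by_contra hcon
  push Not at hcon
  have := mul_nonneg hcon mqF_C_nonneg
  linarith [key]

/-- Micchelli's theorem for multiquadrics: for pairwise distinct points `x 1, …, x N` in `ℝ^d`
and shape parameter `c > 0`, the interpolation matrix with entries
`A i j = √((‖x i − x j‖ / c)² + 1)` is invertible, i.e. its determinant is nonzero. -/
theorem multiquadric_interpolation_matrix_invertible
    {d N : ℕ} (x : Fin N → EuclideanSpace ℝ (Fin d))
    (hx : Function.Injective x) (c : ℝ) (hc : 0 < c)
    (A : Matrix (Fin N) (Fin N) ℝ)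
    (hA : ∀ i j, A i j = Real.sqrt ((‖x i - x j‖ / c) ^ 2 + 1)) :
    A.det ≠ 0 := by
  intro hdet
  obtain ⟨l, hl, hAl⟩ := Matrix.exists_mulVec_eq_zero_iff.2 hdet
  have hneg : ∀ w : Fin N → ℝ, w ≠ 0 → ∑ i, w i = 0 → w ⬝ᵥ A.mulVec w < 0 := by
    intro w hw hs
    have := mq_neg x hx c hc w hw hs
    simp_rw [← hA] at this
    convert this using 1
    simp only [dotProduct, Matrix.mulVec, Finset.mul_sum]
    exact Finset.sum_congr rfl fun i _ => Finset.sum_congr rfl fun j _ => by ring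
  have hsl : ∑ i, l i ≠ 0 := by
    intro h
    have := hneg l hl h
    rw [hAl] at this
    simp at this
  obtain ⟨k, hk⟩ := Function.ne_iff.1 hl
  have hsymm : A.transpose = A := by
    ext i j
    rw [Matrix.transpose_apply, hA, hA, norm_sub_rev]
  have hlA : Matrix.vecMul l A = 0 := by
    rw [← Matrix.mulVec_transpose, hsymm, hAl]
  set w : Fin N → ℝ := Pi.single k 1 - (∑ i, l i)⁻¹ • l with hw
  have hws : ∑ i, w i = 0 := by
    simp [hw, Finset.sum_sub_distrib, ← Finset.mul_sum, inv_mul_cancel₀ hsl]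
  have hq : w ⬝ᵥ A.mulVec w = 1 := by
    have h1 : A.mulVec w = A.mulVec (Pi.single k 1) := by
      rw [hw, Matrix.mulVec_sub, Matrix.mulVec_smul, hAl]; simp
    rw [h1, Matrix.dotProduct_mulVec]
    have h2 : Matrix.vecMul w A = Matrix.vecMul (Pi.single k 1) A := by
      rw [hw, Matrix.sub_vecMul, Matrix.smul_vecMul, hlA]; simp
    rw [h2]
    simp [hA]
  have hw0 : w ≠ 0 := by
    intro h
    rw [h] at hq
    simp at hq
  have := hneg w hw0 hws
  linarith
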